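/- arXiv:1408.5154 — 2 statements merged into one kernel-verified Lean document; each statement's English description precedes it below -/
import Mathlib

section
/- Let V be a finite-dimensional real normed vector space and let S ⊆ V be a set of vectors. Let C be the topological closure of the convex cone generated by S, i.e. the closure of the set of all finite linear combinations of elements of S with nonnegative real coefficients. Assume C is full-dimensional (C spans V as a real vector space) and salient (if x ∈ C and −x ∈ C then x = 0). If α ∈ C spans an extremal ray of C, then there exist a sequence (s_j) of elements of S and positive real numbers r_j such that r_j • s_j converges to α. -/
open Filter Topology

/-!
Let `T` be the closure of the set of positive multiples of elements of `S`. The convex hull of the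
unit vectors of `T` is compact (Carathéodory) and misses `0` because `C` is salient, so the cone
over it, which is the convex cone generated by `T`, is already closed and hence equals `C`. Thus
`α` is a finite sum of elements of `T`. As `α` is extremal, each summand is a nonnegative multiple
of `α`; some summand is nonzero, so `α` itself lies in `T`.
-/

open Module (finrank)
open scoped Pointwise

section ConvexHull

variable {E : Type*} [AddCommGroup E]

theorem convexHull_eq_iUnion_image_stdSimplex {𝕜 : Type*} [Field 𝕜] [LinearOrder 𝕜]
    [IsStrictOrderedRing 𝕜] [Module 𝕜 E] [FiniteDimensional 𝕜 E] (s : Set E) :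
    convexHull 𝕜 s = ⋃ n ∈ Set.Iic (finrank 𝕜 E + 1),
      (fun p : (Fin n → 𝕜) × (Fin n → E) ↦ ∑ i, p.1 i • p.2 i) ''
        (stdSimplex 𝕜 (Fin n) ×ˢ Set.univ.pi fun _ ↦ s) := by
  refine Set.Subset.antisymm (fun x hx ↦ ?_) (Set.iUnion₂_subset fun n _ ↦ ?_)
  · obtain ⟨ι, _, z, w, hz, hind, hw, hw1, rfl⟩ := eq_pos_convex_span_of_mem_convexHull hx
    have hcard : Fintype.card ι ≤ finrank 𝕜 E + 1 :=
      hind.card_le_finrank_succ.trans (Nat.succ_le_succ (Submodule.finrank_le _))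
    let e := (Fintype.equivFin ι).symm
    refine Set.mem_biUnion hcard
      ⟨(w ∘ e, z ∘ e), ⟨⟨fun i ↦ (hw _).le, ?_⟩, fun i _ ↦ hz ⟨e i, rfl⟩⟩, ?_⟩
    · exact (e.sum_comp w).trans hw1
    · exact e.sum_comp fun i ↦ w i • z i
  · rintro _ ⟨⟨w, z⟩, ⟨⟨hw, hw1⟩, hz⟩, rfl⟩
    exact (convex_convexHull 𝕜 s).sum_mem (fun i _ ↦ hw i) hw1
      fun i _ ↦ subset_convexHull 𝕜 s (hz i trivial)

theorem isCompact_convexHull_of_isCompact [Module ℝ E] [TopologicalSpace E] [ContinuousAdd E]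
    [ContinuousSMul ℝ E] [FiniteDimensional ℝ E] {K : Set E} (hK : IsCompact K) :
    IsCompact (convexHull ℝ K) := by
  rw [convexHull_eq_iUnion_image_stdSimplex]
  refine (Set.finite_Iic _).isCompact_biUnion fun n _ ↦ ?_
  exact ((isCompact_stdSimplex ℝ (Fin n)).prod (isCompact_univ_pi fun _ ↦ hK)).image (by fun_prop)

end ConvexHull

section Semiring

variable {R E : Type*} [Semiring R] [PartialOrder R] [IsOrderedRing R]

theorem mem_coneHull_iff_exists_fin_sum [AddCommMonoid E] [Module R E] {s : Set E} {x : E} :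
    x ∈ PointedCone.hull R s ↔ ∃ (n : ℕ) (c : Fin n → R) (v : Fin n → E),
      (∀ i, 0 ≤ c i) ∧ (∀ i, v i ∈ s) ∧ x = ∑ i, c i • v i := by
  rw [PointedCone.hull, Submodule.mem_span_set']
  constructor
  · rintro ⟨n, c, v, rfl⟩
    exact ⟨n, fun i ↦ c i, fun i ↦ v i, fun i ↦ (c i).2, fun i ↦ (v i).2, rfl⟩
  · rintro ⟨n, c, v, hc, hv, rfl⟩
    exact ⟨n, fun i ↦ ⟨c i, hc i⟩, fun i ↦ ⟨v i, hv i⟩, rfl⟩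

theorem mem_coneHull_singleton [AddCommMonoid E] [Module R E] {a x : E} :
    x ∈ PointedCone.hull R {a} ↔ ∃ t : R, 0 ≤ t ∧ x = t • a := by
  rw [PointedCone.hull, Submodule.mem_span_singleton]
  exact ⟨fun ⟨t, ht⟩ ↦ ⟨t, t.2, ht.symm⟩, fun ⟨t, ht, hx⟩ ↦ ⟨⟨t, ht⟩, hx.symm⟩⟩

theorem coneHull_inter_eq_of_isFaceOf [AddCommGroup E] [Module R E] {s : Set E}
    {F : PointedCone R E} (hF : F.IsFaceOf (PointedCone.hull R s)) :
    PointedCone.hull R (s ∩ F) = F := by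
  refine le_antisymm (Submodule.span_le.2 Set.inter_subset_right) fun x hx ↦ ?_
  obtain ⟨n, c, v, hc, hv, rfl⟩ := mem_coneHull_iff_exists_fin_sum.1 (hF.le hx)
  refine Submodule.sum_mem _ fun i _ ↦ ?_
  rcases (hc i).eq_or_lt with hi | hi
  · rw [← hi, zero_smul]
    exact zero_mem _
  · refine PointedCone.smul_mem _ hi.le (PointedCone.subset_hull ⟨hv i, ?_⟩)
    exact hF.mem_of_sum_smul_mem (fun j ↦ PointedCone.subset_hull (hv j)) hc hx i hi

end Semiring

section DivisionRing

variable {R E : Type*} [DivisionRing R] [LinearOrder R] [IsStrictOrderedRing R]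
  [AddCommGroup E] [Module R E]

theorem isFaceOf_coneHull_singleton {C : PointedCone R E} {a : E} (ha : a ∈ C)
    (h : ∀ x ∈ C, ∀ y ∈ C, x + y = a → x ∈ PointedCone.hull R {a}) :
    (PointedCone.hull R {a}).IsFaceOf C := by
  refine .of_mem_of_add_mem_left (Submodule.span_le.2 (Set.singleton_subset_iff.2 ha)) ?_
  intro x y hx hy hxy
  obtain ⟨t, ht, hxy⟩ := mem_coneHull_singleton.1 hxy
  rcases ht.eq_or_lt with rfl | ht
  · refine h x hx (a + y) (C.add_mem ha hy) ?_
    rw [add_left_comm, hxy, zero_smul, add_zero]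
  · have ht' : 0 ≤ t⁻¹ := (inv_pos.2 ht).le
    have hsum : t⁻¹ • x + t⁻¹ • y = a := by rw [← smul_add, hxy, inv_smul_smul₀ ht.ne']
    simpa [smul_inv_smul₀ ht.ne'] using
      PointedCone.smul_mem _ ht.le (h _ (C.smul_mem ht' hx) _ (C.smul_mem ht' hy) hsum)

theorem mem_of_coneHull_singleton_isFaceOf {T : Set E} (hT : Set.Ioi (0 : R) • T ⊆ T) {a : E}
    (ha : a ≠ 0) (hface : (PointedCone.hull R {a}).IsFaceOf (PointedCone.hull R T)) : a ∈ T := by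
  obtain ⟨x, ⟨hxT, hx⟩, hx0⟩ : ∃ x ∈ T ∩ PointedCone.hull R {a}, x ≠ 0 := by
    by_contra! hzero
    have hbot : PointedCone.hull R {a} = ⊥ := by
      rw [← coneHull_inter_eq_of_isFaceOf hface]
      exact Submodule.span_eq_bot.2 hzero
    exact ha (Submodule.span_singleton_eq_bot.1 hbot)
  obtain ⟨t, ht, rfl⟩ := mem_coneHull_singleton.1 hx
  have ht : 0 < t := ht.lt_of_ne' (left_ne_zero_of_smul hx0)
  simpa [inv_smul_smul₀ ht.ne'] using hT (Set.smul_mem_smul (inv_pos.2 ht) hxT)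

end DivisionRing

section Field

variable {𝕜 E : Type*} [Field 𝕜] [LinearOrder 𝕜] [IsStrictOrderedRing 𝕜]
  [AddCommGroup E] [Module 𝕜 E]

theorem coneHull_eq_Ici_smul_convexHull {s : Set E} (hs : s.Nonempty) :
    (PointedCone.hull 𝕜 s : Set E) = Set.Ici (0 : 𝕜) • convexHull 𝕜 s := by
  refine Set.Subset.antisymm (fun x hx ↦ ?_) (Set.smul_subset_iff.2 fun r hr y hy ↦ ?_)
  · induction hx using Submodule.span_induction with
    | mem x hx => exact ⟨1, zero_le_one, x, subset_convexHull 𝕜 s hx, one_smul 𝕜 x⟩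
    | zero =>
      obtain ⟨y, hy⟩ := hs
      exact ⟨0, le_rfl, y, subset_convexHull 𝕜 s hy, zero_smul 𝕜 y⟩
    | add _ _ _ _ hx hy =>
      obtain ⟨p, hp, x, hx, rfl⟩ := hx
      obtain ⟨q, hq, y, hy, rfl⟩ := hy
      obtain ⟨z, hz, hpq⟩ := (convex_convexHull 𝕜 s).exists_mem_add_smul_eq hx hy hp hq
      exact ⟨p + q, add_nonneg hp hq, z, hz, hpq⟩
    | smul r _ _ hx =>
      obtain ⟨p, hp, x, hx, rfl⟩ := hx
      exact ⟨r * p, mul_nonneg r.2 hp, x, hx, mul_smul (r : 𝕜) p x⟩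
  · exact PointedCone.smul_mem _ hr
      (convexHull_min PointedCone.subset_hull (PointedCone.convex _) hy)

theorem zero_notMem_convexHull_of_salient {C : PointedCone 𝕜 E}
    (hC : (C : ConvexCone 𝕜 E).Salient) : (0 : E) ∉ convexHull 𝕜 ((C : Set E) \ {0}) := by
  have hlineal : (C.lineal : Set E) = {0} := C.salient_iff_inter_neg_eq_singleton.1 hC
  have hextreme : (0 : E) ∈ (C : Set E).extremePoints 𝕜 :=
    (hlineal ▸ (PointedCone.IsFaceOf.lineal C).isExtreme).mem_extremePoints
  exact (C.convex.mem_extremePoints_iff_mem_sdiff_convexHull_sdiff.1 hextreme).2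

end Field

section Topological

theorem Ioi_smul_closure_Ioi_smul_subset {R E : Type*} [Semiring R] [PartialOrder R]
    [IsStrictOrderedRing R] [AddCommMonoid E] [Module R E] [TopologicalSpace E]
    [ContinuousConstSMul R E] (S : Set E) :
    Set.Ioi (0 : R) • closure (Set.Ioi (0 : R) • S) ⊆ closure (Set.Ioi (0 : R) • S) := by
  have hmul : Set.Ioi (0 : R) • Set.Ioi (0 : R) ⊆ Set.Ioi 0 :=
    Set.smul_subset_iff.2 fun _ hr _ ht ↦ Set.mem_Ioi.2 (mul_pos hr ht)
  refine (set_smul_closure_subset _ _).trans (closure_mono ?_)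
  rw [← smul_assoc]
  exact Set.smul_subset_smul_right hmul

variable {V : Type*} [NormedAddCommGroup V] [NormedSpace ℝ V]

theorem isClosed_Ici_smul_of_isCompact {K : Set V} (hK : IsCompact K) (h0 : (0 : V) ∉ K) :
    IsClosed (Set.Ici (0 : ℝ) • K) := by
  refine IsSeqClosed.isClosed fun u x hu hux ↦ ?_
  choose r hr y hy hry using fun n ↦ Set.mem_smul.1 (hu n)
  obtain ⟨z, hz, φ, hφ, hyz⟩ := hK.tendsto_subseq hy
  have hux : Tendsto (u ∘ φ) atTop (𝓝 x) := hux.comp hφ.tendsto_atTop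
  have hr_eq (n : ℕ) : r n = ‖u n‖ / ‖y n‖ := by
    have hyn : ‖y n‖ ≠ 0 := norm_ne_zero_iff.2 (ne_of_mem_of_not_mem (hy n) h0)
    rw [← hry, norm_smul, Real.norm_of_nonneg (hr n), mul_div_cancel_right₀ _ hyn]
  have hr_lim : Tendsto (r ∘ φ) atTop (𝓝 (‖x‖ / ‖z‖)) := by
    rw [funext hr_eq]
    exact hux.norm.div hyz.norm (norm_ne_zero_iff.2 (ne_of_mem_of_not_mem hz h0))
  refine ⟨‖x‖ / ‖z‖, Set.mem_Ici.2 (by positivity), z, hz, ?_⟩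
  exact tendsto_nhds_unique ((hr_lim.smul hyz).congr fun n ↦ hry (φ n)) hux

theorem coneHull_inter_unitSphere {T : Set V} (hT : Set.Ioi (0 : ℝ) • T ⊆ T) :
    PointedCone.hull ℝ (T ∩ Metric.sphere 0 1) = PointedCone.hull ℝ T := by
  refine le_antisymm (Submodule.span_mono Set.inter_subset_left)
    (Submodule.span_le.2 fun x hx ↦ ?_)
  rcases eq_or_ne x 0 with rfl | hx0
  · exact zero_mem _
  have hnorm : 0 < ‖x‖ := norm_pos_iff.2 hx0
  have hunit : ‖x‖⁻¹ • x ∈ T ∩ Metric.sphere 0 1 :=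
    ⟨hT (Set.smul_mem_smul (inv_pos.2 hnorm) hx), by simp [norm_smul, hnorm.ne']⟩
  simpa [smul_inv_smul₀ hnorm.ne'] using
    PointedCone.smul_mem _ hnorm.le (PointedCone.subset_hull hunit)

variable [FiniteDimensional ℝ V]

theorem isClosed_coneHull_of_isCompact {K : Set V} (hK : IsCompact K)
    (h0 : (0 : V) ∉ convexHull ℝ K) : IsClosed (PointedCone.hull ℝ K : Set V) := by
  rcases K.eq_empty_or_nonempty with rfl | hne
  · simp
  · rw [coneHull_eq_Ici_smul_convexHull hne]
    exact isClosed_Ici_smul_of_isCompact (isCompact_convexHull_of_isCompact hK) h0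

theorem isClosed_coneHull_of_salient {T : Set V} (hclosed : IsClosed T)
    (hT : Set.Ioi (0 : ℝ) • T ⊆ T) (hsalient : (PointedCone.hull ℝ T : ConvexCone ℝ V).Salient) :
    IsClosed (PointedCone.hull ℝ T : Set V) := by
  rw [← coneHull_inter_unitSphere hT]
  refine isClosed_coneHull_of_isCompact ((isCompact_sphere 0 1).inter_left hclosed) fun h0 ↦ ?_
  refine zero_notMem_convexHull_of_salient hsalient (convexHull_mono ?_ h0)
  exact fun x hx ↦ ⟨PointedCone.subset_hull hx.1, ne_zero_of_mem_unit_sphere ⟨x, hx.2⟩⟩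

theorem closure_coneHull_eq_coneHull_closure_Ioi_smul {S : Set V}
    (hsalient : ((PointedCone.hull ℝ S).closure : ConvexCone ℝ V).Salient) :
    (PointedCone.hull ℝ S).closure = PointedCone.hull ℝ (closure (Set.Ioi (0 : ℝ) • S)) := by
  set T := closure (Set.Ioi (0 : ℝ) • S)
  have hST : S ⊆ T := fun x hx ↦ subset_closure ⟨1, Set.mem_Ioi.2 one_pos, x, hx, one_smul ℝ x⟩
  have hTC : PointedCone.hull ℝ T ≤ (PointedCone.hull ℝ S).closure :=
    Submodule.span_le.2 <| closure_mono <| Set.smul_subset_iff.2 fun _ hr _ hx ↦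
      PointedCone.smul_mem _ (le_of_lt hr) (PointedCone.subset_hull hx)
  have hclosed : IsClosed (PointedCone.hull ℝ T : Set V) :=
    isClosed_coneHull_of_salient isClosed_closure (Ioi_smul_closure_Ioi_smul_subset S)
      (hsalient.anti hTC)
  exact le_antisymm (closure_minimal (Submodule.span_mono hST) hclosed) hTC

theorem mem_closure_Ioi_smul_of_isFaceOf_closure_coneHull {S : Set V} {a : V} (ha : a ≠ 0)
    (hsalient : ((PointedCone.hull ℝ S).closure : ConvexCone ℝ V).Salient)
    (hface : (PointedCone.hull ℝ {a}).IsFaceOf (PointedCone.hull ℝ S).closure) :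
    a ∈ closure (Set.Ioi (0 : ℝ) • S) := by
  rw [closure_coneHull_eq_coneHull_closure_Ioi_smul hsalient] at hface
  exact mem_of_coneHull_singleton_isFaceOf (Ioi_smul_closure_Ioi_smul_subset S) ha hface

end Topological

theorem stmt_0_general {V : Type*} [NormedAddCommGroup V] [NormedSpace ℝ V]
    [FiniteDimensional ℝ V] (S : Set V) (C : Set V)
    (hC : C = closure {x : V | ∃ (n : ℕ) (c : Fin n → ℝ) (s : Fin n → V),
      (∀ i, 0 ≤ c i) ∧ (∀ i, s i ∈ S) ∧ x = ∑ i, c i • s i})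
    (hsalient : ∀ x ∈ C, -x ∈ C → x = 0)
    (α : V) (hαC : α ∈ C) (hα0 : α ≠ 0)
    (hext : ∀ x ∈ C, ∀ y ∈ C, x + y = α →
      (∃ t : ℝ, 0 ≤ t ∧ x = t • α) ∧ (∃ t : ℝ, 0 ≤ t ∧ y = t • α)) :
    ∃ (s : ℕ → V) (r : ℕ → ℝ), (∀ j, s j ∈ S) ∧ (∀ j, 0 < r j) ∧
      Tendsto (fun j => r j • s j) atTop (𝓝 α) := by
  have hC : C = (PointedCone.hull ℝ S).closure := by
    rw [hC, PointedCone.coe_closure]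
    exact congrArg closure (Set.ext fun x ↦ mem_coneHull_iff_exists_fin_sum.symm)
  subst hC
  have hface : (PointedCone.hull ℝ {α}).IsFaceOf (PointedCone.hull ℝ S).closure :=
    isFaceOf_coneHull_singleton hαC fun x hx y hy hxy ↦
      mem_coneHull_singleton.2 (hext x hx y hy hxy).1
  have hα : α ∈ closure (Set.Ioi (0 : ℝ) • S) :=
    mem_closure_Ioi_smul_of_isFaceOf_closure_coneHull hα0
      (fun x hx hx0 hneg ↦ hx0 (hsalient x hx hneg)) hface
  obtain ⟨x, hx, hlim⟩ := mem_closure_iff_seq_limit.1 hα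
  choose r hr s hs hrs using fun j ↦ Set.mem_smul.1 (hx j)
  exact ⟨s, r, hs, hr, hlim.congr fun j ↦ (hrs j).symm⟩

/-- Lemma 5.2 ('irraprox') of the paper: if `C` is the closure of the convex cone generated
by a set `S`, is full-dimensional and salient, and `α ∈ C` spans an extremal ray of `C`,
then `α` is a limit of positive rescalings of elements of `S`. -/
theorem stmt_0 {V : Type*} [NormedAddCommGroup V] [NormedSpace ℝ V]
    [FiniteDimensional ℝ V] (S : Set V) (C : Set V)
    (hC : C = closure {x : V | ∃ (n : ℕ) (c : Fin n → ℝ) (s : Fin n → V),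
      (∀ i, 0 ≤ c i) ∧ (∀ i, s i ∈ S) ∧ x = ∑ i, c i • s i})
    (hfull : Submodule.span ℝ C = ⊤)
    (hsalient : ∀ x ∈ C, -x ∈ C → x = 0)
    (α : V) (hαC : α ∈ C) (hα0 : α ≠ 0)
    (hext : ∀ x ∈ C, ∀ y ∈ C, x + y = α →
      (∃ t : ℝ, 0 ≤ t ∧ x = t • α) ∧ (∃ t : ℝ, 0 ≤ t ∧ y = t • α)) :
    ∃ (s : ℕ → V) (r : ℕ → ℝ), (∀ j, s j ∈ S) ∧ (∀ j, 0 < r j) ∧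
      Tendsto (fun j => r j • s j) atTop (𝓝 α) := by
  exact stmt_0_general S C hC hsalient α hαC hα0 hext
end

section
/- Let T : V → W be a continuous linear map between finite-dimensional real normed vector spaces, let C ⊆ V be a closed convex cone, let D ⊆ W be a subset, and let S ⊆ D be a subset that is dense in D. Suppose there is a constant κ > 0 such that every s ∈ S admits c ∈ C with T(c) = s and ‖c‖ ≤ κ·‖s‖. Then D ⊆ T(C). -/
/-!
Points of `S` close to a given `y ∈ closure S` have lifts of bounded size, and these lie in a
compact subset of `C`. The image of that compact set is closed, hence contains `y`.
-/

open scoped Topology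

theorem closure_subset_image_of_eventually_mem_image_isCompact {X Y : Type*}
    [TopologicalSpace X] [TopologicalSpace Y] [T2Space Y] {f : X → Y} {C : Set X} {S : Set Y}
    (hf : ContinuousOn f C)
    (hlift : ∀ y ∈ closure S, ∃ K ⊆ C, IsCompact K ∧ ∀ᶠ s in 𝓝[S] y, s ∈ f '' K) :
    closure S ⊆ f '' C := by
  intro y hy
  obtain ⟨K, hKC, hK, hnear⟩ := hlift y hy
  have hclosed : IsClosed (f '' K) := (hK.image_of_continuousOn (hf.mono hKC)).isClosed
  have : (𝓝[S] y).NeBot := mem_closure_iff_nhdsWithin_neBot.mp hy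
  have hyK : y ∈ f '' K :=
    hclosed.mem_of_tendsto (tendsto_nhdsWithin_of_tendsto_nhds Filter.tendsto_id) hnear
  exact Set.image_mono hKC hyK

theorem stmt_8_general {X Y : Type*} [PseudoMetricSpace X] [ProperSpace X]
    [TopologicalSpace Y] [T2Space Y] {f : X → Y} {C : Set X} {S : Set Y} {b : Y → ℝ} (x₀ : X)
    (hf : ContinuousOn f C) (hC : IsClosed C) (hb : UpperSemicontinuous b)
    (hlift : ∀ s ∈ S, ∃ c ∈ C, f c = s ∧ dist c x₀ ≤ b s) :
    closure S ⊆ f '' C := by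
  refine closure_subset_image_of_eventually_mem_image_isCompact hf fun y _ ↦
    ⟨C ∩ Metric.closedBall x₀ (b y + 1), Set.inter_subset_left,
      (isCompact_closedBall x₀ (b y + 1)).inter_left hC, ?_⟩
  have hbound : ∀ᶠ s in 𝓝[S] y, b s < b y + 1 :=
    (hb y (b y + 1) (lt_add_one (b y))).filter_mono nhdsWithin_le_nhds
  filter_upwards [hbound, self_mem_nhdsWithin] with s hs hsS
  obtain ⟨c, hcC, hfc, hc⟩ := hlift s hsS
  exact ⟨c, ⟨hcC, hc.trans hs.le⟩, hfc⟩

/-- Convex-geometry skeleton of Corollary 3.14: if every element of a dense subset `S` of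
`D` admits a norm-bounded lift to a closed convex cone `C` along a continuous linear map
`T`, then all of `D` lies in the image `T(C)`. -/
theorem stmt_8 {V W : Type*} [NormedAddCommGroup V] [NormedSpace ℝ V]
    [FiniteDimensional ℝ V] [NormedAddCommGroup W] [NormedSpace ℝ W]
    [FiniteDimensional ℝ W]
    (T : V →L[ℝ] W) (C : Set V) (hclosed : IsClosed C)
    (hadd : ∀ x ∈ C, ∀ y ∈ C, x + y ∈ C)
    (hsmul : ∀ x ∈ C, ∀ r : ℝ, 0 < r → r • x ∈ C)
    (D S : Set W) (hSD : S ⊆ D) (hdense : D ⊆ closure S)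
    (κ : ℝ) (hκ : 0 < κ)
    (hlift : ∀ s ∈ S, ∃ c ∈ C, T c = s ∧ ‖c‖ ≤ κ * ‖s‖) :
    D ⊆ T '' C :=
  hdense.trans <| stmt_8_general (b := fun w ↦ κ * ‖w‖) 0 T.continuous.continuousOn hclosed
    (continuous_const.mul continuous_norm).upperSemicontinuous
    (by simpa only [dist_zero_right] using hlift)
end
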